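/- arXiv:2203.03663 — 2 statements merged into one kernel-verified Lean document; each statement's English description precedes it below -/
import Mathlib

section
/- In the segment construction's intersection graph G, there exist indices i, j ∈ [n] such that a_i and b_j are orthogonal if and only if diam(G) ≥ 4. -/
/-- Vertices of the segment construction for vectors `a₁,…,aₙ, b₁,…,bₙ ∈ {0,1}^d`
(coordinates are indexed by `k ∈ [d] = {1,…,d}`):
the points `ā i = (i,1)` and `b̄ j = (j,−1)`, the segment `ℓ`, the segments `e i k`
(present iff `(a i) k = 1`) and the segments `e' j k` (present iff `(b j) k = 1`). -/
inductive SegVert (n d : ℕ) (a b : Fin n → ℕ → Bool) : Type where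
  | A (i : Fin n)
  | B (j : Fin n)
  | L
  | E (i : Fin n) (k : ℕ) (hk : k ∈ Finset.Icc 1 d) (h : a i k = true)
  | E' (j : Fin n) (k : ℕ) (hk : k ∈ Finset.Icc 1 d) (h : b j k = true)

/-- The closed segment in `ℝ²` corresponding to each vertex of the construction:
`ā i` is the single point `(i, 1)` (for `i ∈ [n]`), `b̄ j` is the single point `(j, −1)`,
`ℓ` goes from `(1,0)` to `(d,0)`, `e i k` goes from `(i,1)` to `(k,0)`, and
`e' j k` goes from `(j,−1)` to `(k,0)`. -/
noncomputable def segOf {n d : ℕ} {a b : Fin n → ℕ → Bool} :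
    SegVert n d a b → Set (ℝ × ℝ)
  | .A i => {(((i : ℕ) : ℝ) + 1, 1)}
  | .B j => {(((j : ℕ) : ℝ) + 1, -1)}
  | .L => segment ℝ ((1 : ℝ), (0 : ℝ)) ((d : ℝ), (0 : ℝ))
  | .E i k _ _ => segment ℝ (((i : ℕ) : ℝ) + 1, (1 : ℝ)) ((k : ℝ), (0 : ℝ))
  | .E' j k _ _ => segment ℝ (((j : ℕ) : ℝ) + 1, (-1 : ℝ)) ((k : ℝ), (0 : ℝ))

/-- The intersection graph of the segment construction: two distinct segments are adjacent
iff they have a common point. -/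
noncomputable def segGraph (n d : ℕ) (a b : Fin n → ℕ → Bool) :
    SimpleGraph (SegVert n d a b) :=
  SimpleGraph.fromRel fun u v => (segOf u ∩ segOf v).Nonempty


/-- Two `{0,1}`-vectors with coordinates indexed by `[d] = {1,…,d}` are orthogonal iff there
is no coordinate `k ∈ [d]` where both equal `1`. -/
def Orth (d : ℕ) (u v : ℕ → Bool) : Prop :=
  ¬ ∃ k ∈ Finset.Icc 1 d, u k = true ∧ v k = true

/-!
Write `u ⊳ k` when some segment equal or adjacent to `u` passes through the axis point `(k, 0)`. If
`u ⊳ k` and `v ⊳ k`, then `u` and `v` are at distance at most three. Now `ā i ⊳ k` whenever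
`(a i) k = 1`, `b̄ j ⊳ k` whenever `(b j) k = 1`, and each other segment meets `ℓ`, hence is related
to all of `[d]`. As any two of the `a i`, and any two of the `b j`, have a common one, only an
orthogonal pair `a i`, `b j` can put two segments at distance at least four. Conversely, `ā i` meets
only the segments `e i k`, `b̄ j` meets only the segments `e' j l`, and `e i k` and `e' j l` lie on
opposite sides of the axis, so they meet only if `k = l`; hence a path of length three from `ā i` to
`b̄ j` yields a common one of `a i` and `b j`.
-/

theorem fst_eq_of_mem_segment_of_snd_eq {𝕜 E : Type*} [CommRing 𝕜] [NoZeroDivisors 𝕜]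
    [PartialOrder 𝕜] [AddCommGroup E] [Module 𝕜 E] {x y : E} {s t : 𝕜} {p : E × 𝕜}
    (hp : p ∈ segment 𝕜 (x, s) (y, t)) (hps : p.2 = s) (hst : s ≠ t) : p.1 = x := by
  obtain ⟨α, β, -, -, hαβ, rfl⟩ := hp
  obtain rfl : α = 1 - β := eq_sub_of_add_eq hαβ
  have hβ : β * (t - s) = 0 := by
    simp only [Prod.smul_mk, Prod.mk_add_mk, smul_eq_mul] at hps
    linear_combination hps
  obtain rfl : β = 0 := (mul_eq_zero.mp hβ).resolve_right (sub_ne_zero.mpr hst.symm)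
  simp

theorem snd_mem_uIcc_of_mem_segment {𝕜 E : Type*} [Field 𝕜] [LinearOrder 𝕜]
    [IsStrictOrderedRing 𝕜] [AddCommGroup E] [Module 𝕜 E] {x y : E} {s t : 𝕜} {p : E × 𝕜}
    (hp : p ∈ segment 𝕜 (x, s) (y, t)) : p.2 ∈ Set.uIcc s t :=
  segment_eq_uIcc s t ▸ (Prod.segment_subset _ _ hp).2

theorem four_le_edist_of_neighbors {V : Type*} {G : SimpleGraph V} {u v : V} (hne : u ≠ v)
    (hadj : ¬ G.Adj u v) (hnbr : ∀ x y, G.Adj u x → G.Adj v y → x ≠ y ∧ ¬ G.Adj x y) :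
    4 ≤ G.edist u v := by
  refine le_iInf fun w => ?_
  match w with
  | .nil => exact absurd rfl hne
  | .cons h .nil => exact absurd h hadj
  | .cons h₁ (.cons h₂ .nil) => exact absurd rfl (hnbr _ _ h₁ h₂.symm).1
  | .cons h₁ (.cons h₂ (.cons h₃ .nil)) => exact absurd h₂ (hnbr _ _ h₁ h₃.symm).2
  | .cons _ (.cons _ (.cons _ (.cons _ w))) =>
    simp only [SimpleGraph.Walk.length_cons]
    exact_mod_cast Nat.le_add_left 4 w.length

theorem not_orth_of_common {d k : ℕ} {u v : ℕ → Bool} (hk : k ∈ Finset.Icc 1 d)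
    (hu : u k = true) (hv : v k = true) : ¬ Orth d u v :=
  not_not.mpr ⟨k, hk, hu, hv⟩

theorem orth_comm {d : ℕ} {u v : ℕ → Bool} : Orth d u v ↔ Orth d v u := by
  simp only [Orth, and_comm]

section SegGraph

variable {n d : ℕ} {a b : Fin n → ℕ → Bool}

theorem segGraph_adj_iff {u v : SegVert n d a b} :
    (segGraph n d a b).Adj u v ↔ u ≠ v ∧ (segOf u ∩ segOf v).Nonempty := by
  rw [segGraph, SimpleGraph.fromRel_adj, Set.inter_comm (segOf v), or_self]

theorem mem_segOf_L {k : ℕ} (hk : k ∈ Finset.Icc 1 d) :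
    ((k : ℝ), (0 : ℝ)) ∈ segOf (SegVert.L : SegVert n d a b) := by
  obtain ⟨h1k, hkd⟩ := Finset.mem_Icc.mp hk
  have hk' : (k : ℝ) ∈ segment ℝ (1 : ℝ) d :=
    Icc_subset_segment ⟨mod_cast h1k, mod_cast hkd⟩
  rw [segOf, ← Prod.image_mk_segment_left]
  exact Set.mem_image_of_mem _ hk'

theorem snd_eq_zero_of_mem_segOf_L {p : ℝ × ℝ}
    (hp : p ∈ segOf (SegVert.L : SegVert n d a b)) : p.2 = 0 := by
  simpa using snd_mem_uIcc_of_mem_segment hp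

theorem snd_nonneg_of_mem_segOf_E {i : Fin n} {k : ℕ} {hk : k ∈ Finset.Icc 1 d}
    {h : a i k = true} {p : ℝ × ℝ} (hp : p ∈ segOf (SegVert.E (b := b) i k hk h)) : 0 ≤ p.2 := by
  simpa using (snd_mem_uIcc_of_mem_segment hp).1

theorem snd_nonpos_of_mem_segOf_E' {j : Fin n} {k : ℕ} {hk : k ∈ Finset.Icc 1 d}
    {h : b j k = true} {p : ℝ × ℝ} (hp : p ∈ segOf (SegVert.E' (a := a) j k hk h)) : p.2 ≤ 0 := by
  simpa using (snd_mem_uIcc_of_mem_segment hp).2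

theorem eq_E_of_adj_A {i : Fin n} {v : SegVert n d a b}
    (hv : (segGraph n d a b).Adj (.A i) v) : ∃ k hk h, v = .E i k hk h := by
  obtain ⟨hne, p, rfl, hp⟩ := segGraph_adj_iff.mp hv
  cases v with
  | A i' =>
    obtain rfl : i = i' := Fin.ext (by simpa [segOf] using hp)
    exact absurd rfl hne
  | B j => norm_num [segOf] at hp
  | L => exact absurd (snd_eq_zero_of_mem_segOf_L hp) one_ne_zero
  | E i' k hk h =>
    obtain rfl : i = i' :=
      Fin.ext (by simpa using fst_eq_of_mem_segment_of_snd_eq hp rfl one_ne_zero)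
    exact ⟨k, hk, h, rfl⟩
  | E' j k hk h => exact absurd (snd_nonpos_of_mem_segOf_E' hp) (by norm_num)

theorem eq_E'_of_adj_B {j : Fin n} {v : SegVert n d a b}
    (hv : (segGraph n d a b).Adj (.B j) v) : ∃ k hk h, v = .E' j k hk h := by
  obtain ⟨hne, p, rfl, hp⟩ := segGraph_adj_iff.mp hv
  cases v with
  | A i => norm_num [segOf] at hp
  | B j' =>
    obtain rfl : j = j' := Fin.ext (by simpa [segOf] using hp)
    exact absurd rfl hne
  | L => exact absurd (snd_eq_zero_of_mem_segOf_L hp) (by norm_num)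
  | E i k hk h => exact absurd (snd_nonneg_of_mem_segOf_E hp) (by norm_num)
  | E' j' k hk h =>
    obtain rfl : j = j' :=
      Fin.ext (by simpa using fst_eq_of_mem_segment_of_snd_eq hp rfl (by norm_num))
    exact ⟨k, hk, h, rfl⟩

theorem eq_of_adj_E_E' {i j : Fin n} {k l : ℕ} {hk : k ∈ Finset.Icc 1 d} {h : a i k = true}
    {hl : l ∈ Finset.Icc 1 d} {h' : b j l = true}
    (hadj : (segGraph n d a b).Adj (.E i k hk h) (.E' j l hl h')) : k = l := by
  obtain ⟨-, p, hp, hp'⟩ := segGraph_adj_iff.mp hadj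
  have hp0 : p.2 = 0 :=
    le_antisymm (snd_nonpos_of_mem_segOf_E' hp') (snd_nonneg_of_mem_segOf_E hp)
  have hpk : p.1 = k :=
    fst_eq_of_mem_segment_of_snd_eq ((segment_symm ..).subset hp) hp0 (by norm_num)
  have hpl : p.1 = l :=
    fst_eq_of_mem_segment_of_snd_eq ((segment_symm ..).subset hp') hp0 (by norm_num)
  exact_mod_cast hpk.symm.trans hpl

theorem four_le_edist_A_B_of_orth {i j : Fin n} (horth : Orth d (a i) (b j)) :
    4 ≤ (segGraph n d a b).edist (.A i) (.B j) := by
  refine four_le_edist_of_neighbors nofun (fun hadj => ?_) fun x y hx hy => ?_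
  · obtain ⟨_, _, _, hB⟩ := eq_E_of_adj_A hadj
    cases hB
  · obtain ⟨k, hk, hak, rfl⟩ := eq_E_of_adj_A hx
    obtain ⟨l, hl, hbl, rfl⟩ := eq_E'_of_adj_B hy
    refine ⟨nofun, fun hadj => ?_⟩
    obtain rfl := eq_of_adj_E_E' hadj
    exact horth ⟨k, hk, hak, hbl⟩

theorem edist_le_one_of_mem_segOf {u v : SegVert n d a b} {p : ℝ × ℝ} (hu : p ∈ segOf u)
    (hv : p ∈ segOf v) : (segGraph n d a b).edist u v ≤ 1 := by
  obtain rfl | hne := eq_or_ne u v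
  · simp
  · exact (SimpleGraph.edist_eq_one_iff_adj.mpr (segGraph_adj_iff.mpr ⟨hne, p, hu, hv⟩)).le

/-- The `0/1`-vector attached to a segment: `a i` for `ā i`, `b j` for `b̄ j`, and the all-ones
vector for the segments meeting `ℓ`. Its ones in `[d]` are axis points `(k, 0)` through which some
segment equal or adjacent to the given one passes. -/
def SegVert.label : SegVert n d a b → ℕ → Bool
  | .A i => a i
  | .B j => b j
  | .L | .E .. | .E' .. => fun _ => true

theorem SegVert.exists_edist_le_one_of_label {u : SegVert n d a b} {k : ℕ}
    (hk : k ∈ Finset.Icc 1 d) (hu : u.label k = true) :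
    ∃ x, (segGraph n d a b).edist u x ≤ 1 ∧ ((k : ℝ), (0 : ℝ)) ∈ segOf x := by
  cases u with
  | A i =>
    exact ⟨.E i k hk hu, edist_le_one_of_mem_segOf rfl (left_mem_segment ..),
      right_mem_segment ..⟩
  | B j =>
    exact ⟨.E' j k hk hu, edist_le_one_of_mem_segOf rfl (left_mem_segment ..),
      right_mem_segment ..⟩
  | L => exact ⟨.L, by simp, mem_segOf_L hk⟩
  | E i l hl h =>
    exact ⟨.L, edist_le_one_of_mem_segOf (right_mem_segment ..) (mem_segOf_L hl), mem_segOf_L hk⟩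
  | E' j l hl h =>
    exact ⟨.L, edist_le_one_of_mem_segOf (right_mem_segment ..) (mem_segOf_L hl), mem_segOf_L hk⟩

theorem edist_le_three_of_not_orth_label {u v : SegVert n d a b}
    (huv : ¬ Orth d u.label v.label) : (segGraph n d a b).edist u v ≤ 3 := by
  obtain ⟨k, hk, huk, hvk⟩ := not_not.mp huv
  obtain ⟨x, hux, hx⟩ := SegVert.exists_edist_le_one_of_label hk huk
  obtain ⟨y, hvy, hy⟩ := SegVert.exists_edist_le_one_of_label hk hvk
  calc (segGraph n d a b).edist u v
      ≤ (segGraph n d a b).edist u x + (segGraph n d a b).edist x v := SimpleGraph.edist_triangle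
    _ ≤ (segGraph n d a b).edist u x +
          ((segGraph n d a b).edist x y + (segGraph n d a b).edist y v) := by
        gcongr; exact SimpleGraph.edist_triangle
    _ ≤ 1 + (1 + 1) := by
        gcongr
        · exact edist_le_one_of_mem_segOf hx hy
        · exact SimpleGraph.edist_comm.trans_le hvy
    _ = 3 := by norm_num

theorem SegVert.not_orth_label (hd : 1 ≤ d) (ha : ∀ i i', ¬ Orth d (a i) (a i'))
    (hb : ∀ j j', ¬ Orth d (b j) (b j')) (hab : ∀ i j, ¬ Orth d (a i) (b j))
    (u v : SegVert n d a b) : ¬ Orth d u.label v.label := by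
  have hones (w : SegVert n d a b) : ¬ Orth d (fun _ => true) w.label := by
    cases w with
    | A i =>
      obtain ⟨k, hk, hik, -⟩ := not_not.mp (ha i i)
      exact not_orth_of_common hk rfl hik
    | B j =>
      obtain ⟨k, hk, hjk, -⟩ := not_not.mp (hb j j)
      exact not_orth_of_common hk rfl hjk
    | L | E | E' => exact not_orth_of_common (Finset.left_mem_Icc.mpr hd) rfl rfl
  match u, v with
  | .A i, .A i' => exact ha i i'
  | .A i, .B j => exact hab i j
  | .B j, .A i => exact orth_comm.not.mpr (hab i j)
  | .B j, .B j' => exact hb j j'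
  | .L, v | .E .., v | .E' .., v => exact hones v
  | u, .L | u, .E .. | u, .E' .. => exact orth_comm.not.mpr (hones u)

end SegGraph

theorem segGraph_orth_iff_diam_ge_four_general {n d : ℕ} (hd : 1 ≤ d) {a b : Fin n → ℕ → Bool}
    (ha : ∀ i i', ¬ Orth d (a i) (a i')) (hb : ∀ j j', ¬ Orth d (b j) (b j')) :
    (∃ i j : Fin n, Orth d (a i) (b j)) ↔ 4 ≤ (segGraph n d a b).ediam := by
  refine ⟨fun ⟨i, j, h⟩ => (four_le_edist_A_B_of_orth h).trans SimpleGraph.edist_le_ediam, ?_⟩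
  contrapose!
  intro hab
  calc (segGraph n d a b).ediam
      ≤ 3 := SimpleGraph.ediam_le_of_edist_le fun u v =>
        edist_le_three_of_not_orth_label (SegVert.not_orth_label hd ha hb hab u v)
    _ < 4 := by norm_num

/-- The sets `A`, `B` contain an orthogonal pair iff the diameter of the
segment construction's intersection graph is at least `4`. -/
theorem segGraph_orth_iff_diam_ge_four (n d : ℕ) (hn : 1 ≤ n) (hd : 2 ≤ d)
    (a b : Fin n → ℕ → Bool)
    (ha1 : ∀ i, a i (d - 1) = true) (ha2 : ∀ i, a i d = false)
    (hb1 : ∀ j, b j (d - 1) = false) (hb2 : ∀ j, b j d = true) :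
    (∃ i j : Fin n, Orth d (a i) (b j)) ↔ 4 ≤ (segGraph n d a b).ediam :=
  segGraph_orth_iff_diam_ge_four_general (by omega)
    (fun i i' => not_orth_of_common (Finset.mem_Icc.mpr (by omega)) (ha1 i) (ha1 i'))
    (fun j j' => not_orth_of_common (Finset.mem_Icc.mpr (by omega)) (hb2 j) (hb2 j'))
end

section
/- Assume that for every i ∈ [6], every vertex v ∈ V_i, and all distinct j, k ∈ [6]∖{i}, there exist v_j ∈ V_j and v_k ∈ V_k with {v, v_j, v_k} ∈ E. Then in the hypercube-center graph G_S, dist_{G_S}(X_{x_1,x_2,x_3}, E_{v_i,v_j,v_k}) ≤ 2 for every left-half center X_{x_1,x_2,x_3} and every edge center E_{v_i,v_j,v_k}. -/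
open scoped Classical

/-- A vertex of the 6-partite 3-uniform hypergraph: a part `ℓ ∈ Fin 6` together with a
value in `[n]` (represented by `Fin n`). -/
abbrev HypVert (n : ℕ) := Fin 6 × Fin n

/-- The value `v/(n+1)` associated to a vertex value `v ∈ [n]` (here `v : Fin n` represents
the value `v+1 ∈ [n]`). -/
noncomputable def hval (n : ℕ) (v : Fin n) : ℝ := ((v : ℕ) + 1) / ((n : ℝ) + 1)

/-- The set of parts met by a set of hypergraph vertices. -/
def hparts {n : ℕ} (e : Finset (HypVert n)) : Finset (Fin 6) := e.image Prod.fst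

/-- The hyperedge set is well-formed: every hyperedge consists of `3` vertices lying in
three pairwise distinct parts. -/
def WellFormed {n : ℕ} (E : Set (Finset (HypVert n))) : Prop :=
  ∀ e ∈ E, e.card = 3 ∧ (hparts e).card = 3

/-- The vertex triple `{(1, x₁), (2, x₂), (3, x₃)}` (parts `1,2,3`, `0`-based `0,1,2`). -/
def tripleL {n : ℕ} (x : Fin 3 → Fin n) : Finset (HypVert n) :=
  Finset.univ.image fun ℓ : Fin 3 => ((⟨(ℓ : ℕ), by have := ℓ.isLt; omega⟩ : Fin 6), x ℓ)

/-- The vertex triple `{(4, y₄), (5, y₅), (6, y₆)}` (parts `4,5,6`, `0`-based `3,4,5`). -/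
def tripleR {n : ℕ} (y : Fin 3 → Fin n) : Finset (HypVert n) :=
  Finset.univ.image fun ℓ : Fin 3 => ((⟨(ℓ : ℕ) + 3, by have := ℓ.isLt; omega⟩ : Fin 6), y ℓ)

/-- The left-half center `X x`: in the coordinate pair of part `ℓ ∈ {1,2,3}` it equals
`(x_ℓ/(n+1), 1 − x_ℓ/(n+1))`, and it equals `(2,2)` in the coordinate pairs of parts
`4,5,6`.  (The `12` coordinates are indexed by `Fin 6 × Fin 2`: a part and a position
within its coordinate pair.) -/
noncomputable def Xpt (n : ℕ) (x : Fin 3 → Fin n) : Fin 6 × Fin 2 → ℝ := fun p =>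
  if h : (p.1 : ℕ) < 3 then
    (if p.2 = 0 then hval n (x ⟨(p.1 : ℕ), h⟩) else 1 - hval n (x ⟨(p.1 : ℕ), h⟩))
  else 2

/-- The right-half center `Y y`: `(2,2)` in the coordinate pairs of parts `1,2,3` and
`(y_ℓ/(n+1), 1 − y_ℓ/(n+1))` in the coordinate pair of part `ℓ ∈ {4,5,6}`. -/
noncomputable def Ypt (n : ℕ) (y : Fin 3 → Fin n) : Fin 6 × Fin 2 → ℝ := fun p =>
  if h : 3 ≤ (p.1 : ℕ) then
    (if p.2 = 0 then hval n (y ⟨(p.1 : ℕ) - 3, by have := p.1.isLt; omega⟩)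
     else 1 - hval n (y ⟨(p.1 : ℕ) - 3, by have := p.1.isLt; omega⟩))
  else 2

/-- The edge center of a hyperedge `e`: in the coordinate pair of a part `ℓ` met by `e`
(with vertex value `v`) it equals `(1 + v/(n+1), 2 − v/(n+1))`, and it equals `(1,1)` in the
coordinate pairs of all other parts. -/
noncomputable def Ept (n : ℕ) (e : Finset (HypVert n)) : Fin 6 × Fin 2 → ℝ := fun p =>
  if (∃ v : Fin n, (p.1, v) ∈ e) then
    (if p.2 = 0 then 1 + ∑ v : Fin n, (if (p.1, v) ∈ e then hval n v else 0)
     else 2 - ∑ v : Fin n, (if (p.1, v) ∈ e then hval n v else 0))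
  else 1

/-- Vertices of the hypercube-center graph `G_S`: left-half centers for non-hyperedge
triples from `V₁ × V₂ × V₃`, right-half centers for non-hyperedge triples from
`V₄ × V₅ × V₆`, and edge centers for hyperedges whose parts lie neither all in `{1,2,3}`
nor all in `{4,5,6}`. -/
inductive GSVert (n : ℕ) (E : Set (Finset (HypVert n))) : Type where
  | left (x : Fin 3 → Fin n) (h : tripleL x ∉ E)
  | right (y : Fin 3 → Fin n) (h : tripleR y ∉ E)
  | edge (e : Finset (HypVert n)) (he : e ∈ E)
      (h1 : ¬ hparts e ⊆ ({0, 1, 2} : Finset (Fin 6)))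
      (h2 : ¬ hparts e ⊆ ({3, 4, 5} : Finset (Fin 6)))

/-- The center in `ℝ^12` associated to each vertex of `G_S`. -/
noncomputable def gsPos {n : ℕ} {E : Set (Finset (HypVert n))} :
    GSVert n E → (Fin 6 × Fin 2 → ℝ)
  | .left x _ => Xpt n x
  | .right y _ => Ypt n y
  | .edge e _ _ _ => Ept n e

/-- The hypercube-center graph `G_S`: two distinct centers are adjacent iff their
`ℓ∞`-distance is at most `1` (the distance on `Fin 6 × Fin 2 → ℝ` is the sup-metric), i.e.
iff the closed axis-parallel unit hypercubes around them intersect. -/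
noncomputable def gsGraph (n : ℕ) (E : Set (Finset (HypVert n))) :
    SimpleGraph (GSVert n E) :=
  SimpleGraph.fromRel fun u v => dist (gsPos u) (gsPos v) ≤ 1

/-!
Edge centers lie in `[1, 2]^12`, so any two of them are within distance `1`. A left-half center
`X_x` is also within distance `1` of every edge center whose hyperedge agrees with `x` on the left
half: in a left part met by the hyperedge the two centers differ by exactly `1`, in the other left
parts a value in `[0, 1]` is compared with `1`, and in the right parts `2` is compared with a value
in `[1, 2]`. A hyperedge joining one vertex of `x` to two right parts agrees with `x`, so its center
is a common neighbour of `X_x` and of any given edge center.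
-/

section Partite

variable {n : ℕ} {e : Finset (HypVert n)}

theorem WellFormed.injOn_fst {E : Set (Finset (HypVert n))} (hE : WellFormed E) (he : e ∈ E) :
    Set.InjOn Prod.fst (e : Set (HypVert n)) :=
  Finset.card_image_iff.mp ((hE e he).2.trans (hE e he).1.symm)

theorem injOn_fst_triple {u v w : HypVert n} (huv : u.1 ≠ v.1) (huw : u.1 ≠ w.1)
    (hvw : v.1 ≠ w.1) :
    Set.InjOn Prod.fst (({u, v, w} : Finset (HypVert n)) : Set (HypVert n)) := by
  simp only [Set.InjOn, Finset.coe_insert, Finset.coe_singleton]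
  grind

theorem not_hparts_subset_of_mem {w : HypVert n} (hw : w ∈ e) {s : Finset (Fin 6)}
    (hs : w.1 ∉ s) : ¬ hparts e ⊆ s :=
  fun h => hs (h (Finset.mem_image_of_mem Prod.fst hw))

/-- The hyperedge `e` agrees with the triple `x` on the left half: every vertex of `e` in one of
the parts `1, 2, 3` is the vertex of `x` in that part. This is the condition for the center of `e`
to be close to the left-half center of `x`. -/
def AgreesLeft (x : Fin 3 → Fin n) (e : Finset (HypVert n)) : Prop :=
  ∀ (ℓ : Fin 6) (h : (ℓ : ℕ) < 3) (v : Fin n), (ℓ, v) ∈ e → v = x ⟨ℓ, h⟩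

theorem agreesLeft_triple (x : Fin 3 → Fin n) (i : Fin 3) {v w : HypVert n}
    (hv : 3 ≤ v.1) (hw : 3 ≤ w.1) :
    AgreesLeft x {(i.castLE (by decide), x i), v, w} := by
  intro ℓ hℓ u hu
  simp only [Finset.mem_insert, Finset.mem_singleton, Prod.mk.injEq] at hu
  obtain ⟨rfl, rfl⟩ | rfl | rfl := hu
  · rfl
  · exact absurd hv (not_le.mpr hℓ)
  · exact absurd hw (not_le.mpr hℓ)

end Partite

section Centers

variable {n : ℕ} {x : Fin 3 → Fin n} {e f : Finset (HypVert n)} {ℓ : Fin 6}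

theorem hval_mem_Icc (v : Fin n) : hval n v ∈ Set.Icc (0 : ℝ) 1 := by
  have hv : ((v : ℕ) : ℝ) ≤ n := by exact_mod_cast v.isLt.le
  exact ⟨by unfold hval; positivity, div_le_one_of_le₀ (by linarith) (by positivity)⟩

theorem Xpt_of_lt (x : Fin 3 → Fin n) (hℓ : (ℓ : ℕ) < 3) (i : Fin 2) :
    Xpt n x (ℓ, i) = if i = 0 then hval n (x ⟨ℓ, hℓ⟩) else 1 - hval n (x ⟨ℓ, hℓ⟩) :=
  dif_pos hℓ

theorem Xpt_of_not_lt (x : Fin 3 → Fin n) (hℓ : ¬ (ℓ : ℕ) < 3) (i : Fin 2) :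
    Xpt n x (ℓ, i) = 2 :=
  dif_neg hℓ

theorem Xpt_mem_Icc_of_lt (x : Fin 3 → Fin n) (hℓ : (ℓ : ℕ) < 3) (i : Fin 2) :
    Xpt n x (ℓ, i) ∈ Set.Icc (0 : ℝ) 1 := by
  obtain ⟨h0, h1⟩ := hval_mem_Icc (x ⟨ℓ, hℓ⟩)
  rw [Xpt_of_lt x hℓ]
  split_ifs <;> constructor <;> linarith

theorem Ept_of_mem (he : Set.InjOn Prod.fst (e : Set (HypVert n))) {v : Fin n}
    (hv : (ℓ, v) ∈ e) (i : Fin 2) :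
    Ept n e (ℓ, i) = if i = 0 then 1 + hval n v else 2 - hval n v := by
  have mem_iff_eq : ∀ u : Fin n, (ℓ, u) ∈ e ↔ u = v := fun u =>
    ⟨fun hu => congrArg Prod.snd (he hu hv rfl), fun h => h ▸ hv⟩
  simp [Ept, mem_iff_eq]

theorem Ept_of_forall_notMem (h : ∀ v : Fin n, (ℓ, v) ∉ e) (i : Fin 2) : Ept n e (ℓ, i) = 1 :=
  if_neg (not_exists.mpr h)

theorem Ept_mem_Icc (he : Set.InjOn Prod.fst (e : Set (HypVert n))) (p : Fin 6 × Fin 2) :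
    Ept n e p ∈ Set.Icc (1 : ℝ) 2 := by
  obtain ⟨ℓ, i⟩ := p
  by_cases h : ∃ v : Fin n, (ℓ, v) ∈ e
  · obtain ⟨v, hv⟩ := h
    obtain ⟨h0, h1⟩ := hval_mem_Icc v
    rw [Ept_of_mem he hv]
    split_ifs <;> constructor <;> linarith
  · rw [Ept_of_forall_notMem (not_exists.mp h)]
    norm_num

theorem dist_Ept_Ept_le_one (he : Set.InjOn Prod.fst (e : Set (HypVert n)))
    (hf : Set.InjOn Prod.fst (f : Set (HypVert n))) : dist (Ept n e) (Ept n f) ≤ 1 :=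
  (dist_pi_le_iff zero_le_one).mpr fun p =>
    (Real.dist_le_of_mem_Icc (Ept_mem_Icc he p) (Ept_mem_Icc hf p)).trans_eq (by norm_num)

theorem AgreesLeft.Ept_eq_Xpt_add_one (h : AgreesLeft x e)
    (he : Set.InjOn Prod.fst (e : Set (HypVert n))) (hℓ : (ℓ : ℕ) < 3) {v : Fin n}
    (hv : (ℓ, v) ∈ e) (i : Fin 2) : Ept n e (ℓ, i) = Xpt n x (ℓ, i) + 1 := by
  rw [Ept_of_mem he hv, Xpt_of_lt x hℓ, h ℓ hℓ v hv]
  split_ifs <;> ring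

theorem AgreesLeft.dist_Xpt_Ept_le_one (h : AgreesLeft x e)
    (he : Set.InjOn Prod.fst (e : Set (HypVert n))) : dist (Xpt n x) (Ept n e) ≤ 1 := by
  refine (dist_pi_le_iff zero_le_one).mpr fun ⟨ℓ, i⟩ => ?_
  by_cases hℓ : (ℓ : ℕ) < 3
  · by_cases hmet : ∃ v : Fin n, (ℓ, v) ∈ e
    · obtain ⟨v, hv⟩ := hmet
      simp [h.Ept_eq_Xpt_add_one he hℓ hv]
    · rw [Ept_of_forall_notMem (not_exists.mp hmet)]
      exact (Real.dist_le_of_mem_Icc (Xpt_mem_Icc_of_lt x hℓ i)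
        (Set.right_mem_Icc.mpr zero_le_one)).trans_eq (sub_zero 1)
  · rw [Xpt_of_not_lt x hℓ]
    exact (Real.dist_le_of_mem_Icc (Set.right_mem_Icc.mpr one_le_two)
      (Ept_mem_Icc he (ℓ, i))).trans_eq (by norm_num)

end Centers

section Graph

variable {n : ℕ} {E : Set (Finset (HypVert n))}

theorem gsGraph_edist_le_one {u v : GSVert n E} (h : dist (gsPos u) (gsPos v) ≤ 1) :
    (gsGraph n E).edist u v ≤ 1 :=
  SimpleGraph.edist_le_one_iff_adj_or_eq.mpr <|
    or_iff_not_imp_right.mpr fun huv => (SimpleGraph.fromRel_adj _ _ _).mpr ⟨huv, .inl h⟩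

theorem gsGraph_edge_distance_general {x : Fin 3 → Fin n} (hx : tripleL x ∉ E)
    {e : Finset (HypVert n)} (he : e ∈ E)
    (h1 : ¬ hparts e ⊆ ({0, 1, 2} : Finset (Fin 6)))
    (h2 : ¬ hparts e ⊆ ({3, 4, 5} : Finset (Fin 6)))
    (he_inj : Set.InjOn Prod.fst (e : Set (HypVert n)))
    (i : Fin 3) {v w : HypVert n} (hv : 3 ≤ v.1) (hw : 3 ≤ w.1) (hvw : v.1 ≠ w.1)
    (hf : {(i.castLE (by decide), x i), v, w} ∈ E) :
    (gsGraph n E).edist (GSVert.left x hx) (GSVert.edge e he h1 h2) ≤ 2 := by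
  have left_ne {u : HypVert n} (hu : 3 ≤ u.1) : i.castLE (by decide) ≠ u.1 := by
    grind
  have hf_inj := injOn_fst_triple (u := (i.castLE (by decide), x i)) (left_ne hv) (left_ne hw) hvw
  set f : Finset (HypVert n) := {(i.castLE (by decide), x i), v, w}
  have hf1 : ¬ hparts f ⊆ {0, 1, 2} :=
    not_hparts_subset_of_mem (w := v) (by simp [f]) (by grind)
  have hf2 : ¬ hparts f ⊆ {3, 4, 5} :=
    not_hparts_subset_of_mem (w := (i.castLE (by decide), x i)) (by simp [f]) (by grind)
  calc (gsGraph n E).edist (.left x hx) (.edge e he h1 h2)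
      ≤ (gsGraph n E).edist (.left x hx) (.edge f hf hf1 hf2)
        + (gsGraph n E).edist (.edge f hf hf1 hf2) (.edge e he h1 h2) :=
        SimpleGraph.edist_triangle
    _ ≤ 1 + 1 := add_le_add
        (gsGraph_edist_le_one ((agreesLeft_triple x i hv hw).dist_Xpt_Ept_le_one hf_inj))
        (gsGraph_edist_le_one (dist_Ept_Ept_le_one hf_inj he_inj))
    _ = 2 := one_add_one_eq_two

end Graph

/-- If every vertex `w` extends to a hyperedge through any two other
prescribed distinct parts, then in `G_S` every left-half center is within distance `2` of
every edge center. -/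
theorem gsGraph_edge_distance (n : ℕ) (hn : 1 ≤ n) (E : Set (Finset (HypVert n)))
    (hE : WellFormed E)
    (htech : ∀ (w : HypVert n) (j k : Fin 6), j ≠ k → j ≠ w.1 → k ≠ w.1 →
      ∃ vj vk : Fin n, ({w, (j, vj), (k, vk)} : Finset (HypVert n)) ∈ E)
    (x : Fin 3 → Fin n) (hx : tripleL x ∉ E)
    (e : Finset (HypVert n)) (he : e ∈ E)
    (h1 : ¬ hparts e ⊆ ({0, 1, 2} : Finset (Fin 6)))
    (h2 : ¬ hparts e ⊆ ({3, 4, 5} : Finset (Fin 6))) :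
    (gsGraph n E).edist (GSVert.left x hx) (GSVert.edge e he h1 h2) ≤ 2 := by
  obtain ⟨a, b, hf⟩ := htech (0, x 0) 3 4 (by decide) (by simp) (by simp)
  exact gsGraph_edge_distance_general hx he h1 h2 (hE.injOn_fst he) 0 (v := (3, a)) (w := (4, b))
    le_rfl (by simp) (by simp) hf
end
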